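/- (Theorem 1, qubit count for δ = 3/4.) Let b_1, …, b_m be a (3/4)-LLL-reduced basis of a full-rank lattice in ℝ^m. If the (m−i)-th coefficient is encoded with ξ_{m−i} = m + i binary digits (representing the integers from −2^{m+i−1} to 2^{m+i−1} − 1), for i = 0, 1, …, m−1, then every lattice vector v = Σ_{i=1}^{m} c_i b_i with integer coefficients and ‖v‖ < ‖b_1‖ — in particular every shortest nonzero lattice vector — has each coefficient c_{m−i} within the representable range [−2^{m+i−1}, 2^{m+i−1} − 1], and the total number of binary digits used is Σ_{i=0}^{m−1} (m + i) = m(3m − 1)/2. -/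

import Mathlib

open Finset
open scoped RealInnerProductSpace

/-!
Index the family as `b₀, …, bₘ₋₁`, write `b*` for its Gram–Schmidt orthogonalization, and let
`v = ∑ cᵢ bᵢ`. The component of `v` along `b*ₖ` is `(cₖ + ∑_{i > k} cᵢ μₖᵢ) b*ₖ`, so its norm is at
most `‖v‖`. The Lovász condition and `|μ| ≤ 1/2` give `√(δ - 1/4) ‖b*ᵢ‖ ≤ ‖b*ᵢ₊₁‖`, hence
`√(δ - 1/4)ᵏ ‖b₀‖ ≤ ‖b*ₖ‖`. If `‖v‖ < ‖b₀‖`, each `cₖ + ∑_{i > k} cᵢ μₖᵢ` is therefore smaller than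
`√(δ - 1/4)⁻ᵏ` in absolute value, and back-substitution from the last coefficient loses a factor of
at most `3/2` per step. For `δ ≥ 1/2` the first factor is at most `2ᵏ`, and `3/2 ≤ 2`.
-/

section BackSubstitution

theorem sum_Ioi_rev {M : Type*} [AddCommMonoid M] {m : ℕ} (f : ℕ → M) (k : Fin m) :
    ∑ i ∈ Ioi k, f i.rev = ∑ j ∈ range k.rev, f j := by
  rw [← Nat.Iio_eq_range, ← Fin.map_valEmbedding_Iio, ← Fin.map_revPerm_Ioi, sum_map, sum_map]
  rfl

theorem abs_lt_of_abs_add_sum_Ioi_lt {R : Type*} [CommRing R] [LinearOrder R]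
    [IsStrictOrderedRing R] {m : ℕ} {c : Fin m → R} {a : Fin m → Fin m → R} {B η : R}
    (ha : ∀ k i, k < i → |a k i| ≤ η) (hc : ∀ k, |c k + ∑ i ∈ Ioi k, c i * a k i| < B)
    (k : Fin m) : |c k| < B * (1 + η) ^ (k.rev : ℕ) := by
  induction k using WellFoundedGT.induction with
  | ind k ih =>
    have tail_le : |∑ i ∈ Ioi k, c i * a k i| ≤ B * ((1 + η) ^ (k.rev : ℕ) - 1) :=
      calc |∑ i ∈ Ioi k, c i * a k i|
          ≤ ∑ i ∈ Ioi k, |c i| * |a k i| := by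
            simpa only [abs_mul] using abs_sum_le_sum_abs (fun i ↦ c i * a k i) (Ioi k)
        _ ≤ ∑ i ∈ Ioi k, B * (1 + η) ^ (i.rev : ℕ) * η := by
            refine sum_le_sum fun i hi ↦ ?_
            have hki := mem_Ioi.mp hi
            exact mul_le_mul (ih i hki).le (ha k i hki) (abs_nonneg _)
              ((abs_nonneg _).trans (ih i hki).le)
        _ = B * ((∑ j ∈ range k.rev, (1 + η) ^ j) * (1 + η - 1)) := by
            rw [← sum_mul, ← mul_sum, sum_Ioi_rev (fun j ↦ (1 + η) ^ j)]
            ring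
        _ = B * ((1 + η) ^ (k.rev : ℕ) - 1) := by rw [geom_sum_mul]
    calc |c k| ≤ |c k + ∑ i ∈ Ioi k, c i * a k i| + |∑ i ∈ Ioi k, c i * a k i| := by
          simpa using abs_sub (c k + ∑ i ∈ Ioi k, c i * a k i) (∑ i ∈ Ioi k, c i * a k i)
      _ < B + B * ((1 + η) ^ (k.rev : ℕ) - 1) := add_lt_add_of_lt_of_le (hc k) tail_le
      _ = B * (1 + η) ^ (k.rev : ℕ) := by ring

end BackSubstitution

section GramSchmidt

open InnerProductSpace (gramSchmidt gramSchmidt_def gramSchmidt_def''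
  gramSchmidt_inv_triangular gramSchmidt_orthogonal)

variable {E ι : Type*} [NormedAddCommGroup E] [InnerProductSpace ℝ E]
  [LinearOrder ι] [LocallyFiniteOrderBot ι] [WellFoundedLT ι]

/-- The Gram–Schmidt coefficient `μ_{j,i}` of the family `b`: the coefficient of the orthogonal
projection of `b i` onto the line spanned by the `j`-th Gram–Schmidt vector (and `0` if that
vector vanishes). -/
noncomputable def gramSchmidtCoeff (b : ι → E) (j i : ι) : ℝ :=
  ⟪b i, gramSchmidt ℝ b j⟫ / ⟪gramSchmidt ℝ b j, gramSchmidt ℝ b j⟫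

theorem eq_gramSchmidt_of_forall_eq_sub_sum {b bt : ι → E}
    (hbt : ∀ i, bt i = b i - ∑ j ∈ Iio i, (⟪b i, bt j⟫ / ⟪bt j, bt j⟫) • bt j) :
    bt = gramSchmidt ℝ b := by
  funext i
  induction i using WellFoundedLT.induction with
  | ind i ih =>
    rw [hbt, gramSchmidt_def]
    congr 1
    refine sum_congr rfl fun j hj ↦ ?_
    rw [ih j (mem_Iio.mp hj), Submodule.starProjection_singleton, real_inner_self_eq_norm_sq,
      real_inner_comm]
    rfl

theorem gramSchmidt_eq_self_of_isMin (b : ι → E) {i : ι} (hi : IsMin i) :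
    gramSchmidt ℝ b i = b i := by
  rw [gramSchmidt_def, Iio_eq_empty.mpr hi, sum_empty, sub_zero]

theorem gramSchmidtCoeff_mul_norm_sq (b : ι → E) (j i : ι) :
    gramSchmidtCoeff b j i * ‖gramSchmidt ℝ b j‖ ^ 2 = ⟪b i, gramSchmidt ℝ b j⟫ := by
  rw [gramSchmidtCoeff, ← real_inner_self_eq_norm_sq]
  exact div_mul_cancel_of_imp fun h ↦ by rw [inner_self_eq_zero.mp h, inner_zero_right]

theorem inner_gramSchmidt_self (b : ι → E) (k : ι) :
    ⟪b k, gramSchmidt ℝ b k⟫ = ‖gramSchmidt ℝ b k‖ ^ 2 := by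
  have sum_eq_zero : ⟪∑ j ∈ Iio k, (⟪gramSchmidt ℝ b j, b k⟫ / ‖gramSchmidt ℝ b j‖ ^ 2) •
      gramSchmidt ℝ b j, gramSchmidt ℝ b k⟫ = 0 := by
    rw [sum_inner]
    refine Finset.sum_eq_zero fun j hj ↦ ?_
    rw [real_inner_smul_left, gramSchmidt_orthogonal ℝ b (mem_Iio.mp hj).ne, mul_zero]
  conv_lhs => rw [gramSchmidt_def'' ℝ b k]
  rw [inner_add_left, real_inner_self_eq_norm_sq]
  exact add_eq_left.mpr sum_eq_zero

variable [Fintype ι] [LocallyFiniteOrderTop ι]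

theorem inner_sum_smul_gramSchmidt (b : ι → E) (c : ι → ℝ) (k : ι) :
    ⟪∑ i, c i • b i, gramSchmidt ℝ b k⟫ =
      (c k + ∑ i ∈ Ioi k, c i * gramSchmidtCoeff b k i) * ‖gramSchmidt ℝ b k‖ ^ 2 := by
  have inner_eq_zero_of_notMem (i : ι) (hi : i ∉ Ici k) :
      ⟪c i • b i, gramSchmidt ℝ b k⟫ = 0 := by
    rw [real_inner_smul_left, real_inner_comm,
      gramSchmidt_inv_triangular ℝ b (not_le.mp (mem_Ici.not.mp hi)), mul_zero]
  calc ⟪∑ i, c i • b i, gramSchmidt ℝ b k⟫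
      = ∑ i ∈ Ici k, ⟪c i • b i, gramSchmidt ℝ b k⟫ := by
        rw [sum_inner]
        exact (sum_subset (subset_univ _) fun i _ ↦ inner_eq_zero_of_notMem i).symm
    _ = c k * ‖gramSchmidt ℝ b k‖ ^ 2 +
          ∑ i ∈ Ioi k, c i * (gramSchmidtCoeff b k i * ‖gramSchmidt ℝ b k‖ ^ 2) := by
        simp only [← Ioi_insert, sum_insert notMem_Ioi_self, real_inner_smul_left,
          inner_gramSchmidt_self, gramSchmidtCoeff_mul_norm_sq]
    _ = (c k + ∑ i ∈ Ioi k, c i * gramSchmidtCoeff b k i) * ‖gramSchmidt ℝ b k‖ ^ 2 := by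
        simp only [add_mul, sum_mul, mul_assoc]

theorem abs_add_sum_mul_norm_gramSchmidt_le (b : ι → E) (c : ι → ℝ) (k : ι) :
    |c k + ∑ i ∈ Ioi k, c i * gramSchmidtCoeff b k i| * ‖gramSchmidt ℝ b k‖ ≤
      ‖∑ i, c i • b i‖ := by
  rcases (norm_nonneg (gramSchmidt ℝ b k)).eq_or_lt' with hk | hk
  · rw [hk, mul_zero]
    exact norm_nonneg _
  · refine le_of_mul_le_mul_right ?_ hk
    have cauchy_schwarz := abs_real_inner_le_norm (∑ i, c i • b i) (gramSchmidt ℝ b k)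
    rwa [inner_sum_smul_gramSchmidt, abs_mul, abs_sq, sq, ← mul_assoc] at cauchy_schwarz

end GramSchmidt

section LLL

open InnerProductSpace (gramSchmidt)

variable {E : Type*} [NormedAddCommGroup E] [InnerProductSpace ℝ E] {m : ℕ} {b : Fin m → E}
  {δ : ℝ}

/-- A finite family of vectors in a real inner product space is `δ`-LLL-reduced if it is
size-reduced and satisfies the Lovász condition with parameter `δ`. Linear independence is kept
separate, so that the notion applies to arbitrary families. -/
structure IsLLLReduced (δ : ℝ) (b : Fin m → E) : Prop where
  abs_coeff_le : ∀ j i : Fin m, j < i → |gramSchmidtCoeff b j i| ≤ 1 / 2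
  lovasz : ∀ (i : Fin m) (h : (i : ℕ) + 1 < m),
    (δ - gramSchmidtCoeff b i ⟨i + 1, h⟩ ^ 2) * ‖gramSchmidt ℝ b i‖ ^ 2 ≤
      ‖gramSchmidt ℝ b ⟨i + 1, h⟩‖ ^ 2

namespace IsLLLReduced

theorem of_recurrence {bt : Fin m → E} {μ : Fin m → Fin m → ℝ}
    (hμ : ∀ i j : Fin m, j < i → μ j i = ⟪b i, bt j⟫ / ⟪bt j, bt j⟫)
    (hbt : ∀ i, bt i = b i - ∑ j ∈ Iio i, μ j i • bt j)
    (hsize : ∀ i j : Fin m, j < i → |μ j i| ≤ 1 / 2)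
    (hLovasz : ∀ (i : Fin m) (h : (i : ℕ) + 1 < m),
      (δ - μ i ⟨i + 1, h⟩ ^ 2) * ‖bt i‖ ^ 2 ≤ ‖bt ⟨i + 1, h⟩‖ ^ 2) :
    IsLLLReduced δ b := by
  obtain rfl : bt = gramSchmidt ℝ b := eq_gramSchmidt_of_forall_eq_sub_sum fun i ↦
    (hbt i).trans <| congrArg (b i - ·) <| sum_congr rfl fun j hj ↦ by rw [hμ i j (mem_Iio.mp hj)]
  have coeff_eq (j i : Fin m) (hji : j < i) : gramSchmidtCoeff b j i = μ j i := (hμ i j hji).symm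
  constructor
  · intro j i hji
    exact coeff_eq j i hji ▸ hsize i j hji
  · intro i h
    exact coeff_eq i ⟨i + 1, h⟩ (Fin.lt_def.mpr i.val.lt_succ_self) ▸ hLovasz i h

theorem mono {δ' : ℝ} (hb : IsLLLReduced δ b) (h : δ' ≤ δ) : IsLLLReduced δ' b where
  abs_coeff_le := hb.abs_coeff_le
  lovasz i hi := le_trans (by gcongr) (hb.lovasz i hi)

theorem sqrt_mul_norm_gramSchmidt_le_succ (hb : IsLLLReduced δ b) (i : Fin m)
    (h : (i : ℕ) + 1 < m) :
    √(δ - 1 / 4) * ‖gramSchmidt ℝ b i‖ ≤ ‖gramSchmidt ℝ b ⟨i + 1, h⟩‖ := by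
  have coeff_sq_le : gramSchmidtCoeff b i ⟨i + 1, h⟩ ^ 2 ≤ 1 / 4 :=
    (sq_le_sq.mpr ((hb.abs_coeff_le _ _ (Fin.lt_def.mpr i.val.lt_succ_self)).trans
      (le_abs_self _))).trans_eq (by norm_num)
  rw [← Real.sqrt_sq (norm_nonneg (gramSchmidt ℝ b i)), ← Real.sqrt_mul' _ (sq_nonneg _)]
  refine Real.sqrt_le_iff.mpr ⟨norm_nonneg _, le_trans ?_ (hb.lovasz i h)⟩
  gcongr

theorem sqrt_pow_mul_norm_gramSchmidt_le (hb : IsLLLReduced δ b) {k l : Fin m} (hkl : k ≤ l) :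
    √(δ - 1 / 4) ^ (l - k : ℕ) * ‖gramSchmidt ℝ b k‖ ≤ ‖gramSchmidt ℝ b l‖ := by
  obtain ⟨l, hl⟩ := l
  induction l, (show (k : ℕ) ≤ l from hkl) using Nat.le_induction with
  | base => simp
  | succ l hkl' ih =>
    have hl' : l < m := l.lt_succ_self.trans hl
    calc √(δ - 1 / 4) ^ (l + 1 - k) * ‖gramSchmidt ℝ b k‖
        = √(δ - 1 / 4) * (√(δ - 1 / 4) ^ (l - k) * ‖gramSchmidt ℝ b k‖) := by
          rw [Nat.succ_sub hkl', pow_succ']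
          ring
      _ ≤ √(δ - 1 / 4) * ‖gramSchmidt ℝ b ⟨l, hl'⟩‖ := by
          gcongr
          exact ih hl' hkl'
      _ ≤ ‖gramSchmidt ℝ b ⟨l + 1, hl⟩‖ := hb.sqrt_mul_norm_gramSchmidt_le_succ ⟨l, hl'⟩ hl

variable [NeZero m]

theorem abs_add_sum_mul_sqrt_pow_lt_one (hb : IsLLLReduced δ b) {c : Fin m → ℝ}
    (hc : ‖∑ i, c i • b i‖ < ‖b 0‖) (k : Fin m) :
    |c k + ∑ i ∈ Ioi k, c i * gramSchmidtCoeff b k i| * √(δ - 1 / 4) ^ (k : ℕ) < 1 := by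
  have norm_zero_le : √(δ - 1 / 4) ^ (k : ℕ) * ‖b 0‖ ≤ ‖gramSchmidt ℝ b k‖ := by
    have gramSchmidt_zero_eq : gramSchmidt ℝ b 0 = b 0 :=
      gramSchmidt_eq_self_of_isMin b fun i _ ↦ Fin.zero_le i
    simpa [gramSchmidt_zero_eq] using hb.sqrt_pow_mul_norm_gramSchmidt_le (Fin.zero_le k)
  refine lt_of_mul_lt_mul_right ?_ (norm_nonneg (b 0))
  calc |c k + ∑ i ∈ Ioi k, c i * gramSchmidtCoeff b k i| * √(δ - 1 / 4) ^ (k : ℕ) * ‖b 0‖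
      ≤ |c k + ∑ i ∈ Ioi k, c i * gramSchmidtCoeff b k i| * ‖gramSchmidt ℝ b k‖ := by
        rw [mul_assoc]
        gcongr
    _ ≤ ‖∑ i, c i • b i‖ := abs_add_sum_mul_norm_gramSchmidt_le b c k
    _ < 1 * ‖b 0‖ := by rwa [one_mul]

theorem abs_lt_inv_sqrt_pow_mul (hb : IsLLLReduced δ b) (hδ : 1 / 4 < δ) (hδ' : δ ≤ 5 / 4)
    {c : Fin m → ℝ} (hc : ‖∑ i, c i • b i‖ < ‖b 0‖) (k : Fin m) :
    |c k| < (√(δ - 1 / 4))⁻¹ ^ (m - 1) * (3 / 2) ^ (k.rev : ℕ) := by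
  have sqrt_pos : 0 < √(δ - 1 / 4) := Real.sqrt_pos.mpr (by linarith)
  have sqrt_le_one : √(δ - 1 / 4) ≤ 1 := Real.sqrt_le_one.mpr (by linarith)
  have component_lt (k : Fin m) :
      |c k + ∑ i ∈ Ioi k, c i * gramSchmidtCoeff b k i| < (√(δ - 1 / 4))⁻¹ ^ (m - 1) :=
    calc |c k + ∑ i ∈ Ioi k, c i * gramSchmidtCoeff b k i|
        < (√(δ - 1 / 4))⁻¹ ^ (k : ℕ) := by
          rw [inv_pow, ← one_div, lt_div_iff₀ (pow_pos sqrt_pos _)]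
          exact hb.abs_add_sum_mul_sqrt_pow_lt_one hc k
      _ ≤ (√(δ - 1 / 4))⁻¹ ^ (m - 1) :=
          pow_le_pow_right₀ ((one_le_inv₀ sqrt_pos).mpr sqrt_le_one) (Nat.le_sub_one_of_lt k.isLt)
  have one_add_half : (1 + 1 / 2 : ℝ) = 3 / 2 := by norm_num
  exact one_add_half ▸ abs_lt_of_abs_add_sum_Ioi_lt hb.abs_coeff_le component_lt k

theorem abs_lt_two_pow (hb : IsLLLReduced δ b) (hδ : 1 / 2 ≤ δ) {c : Fin m → ℝ}
    (hc : ‖∑ i, c i • b i‖ < ‖b 0‖) (k : Fin m) : |c k| < 2 ^ (m - 1 + k.rev) := by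
  have inv_sqrt_eq_two : (√(1 / 2 - 1 / 4 : ℝ))⁻¹ = 2 := by
    rw [show (1 / 2 - 1 / 4 : ℝ) = (1 / 2) ^ 2 by norm_num, Real.sqrt_sq (by norm_num)]
    norm_num
  calc |c k| < (√(1 / 2 - 1 / 4))⁻¹ ^ (m - 1) * (3 / 2) ^ (k.rev : ℕ) :=
        (hb.mono hδ).abs_lt_inv_sqrt_pow_mul (by norm_num) (by norm_num) hc k
    _ ≤ 2 ^ (m - 1) * 2 ^ (k.rev : ℕ) := by
        rw [inv_sqrt_eq_two]
        gcongr
        norm_num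
    _ = 2 ^ (m - 1 + k.rev) := (pow_add _ _ _).symm

end IsLLLReduced

end LLL

theorem sum_range_const_add_id (m : ℕ) : ∑ i ∈ range m, (m + i) = m * (3 * m - 1) / 2 := by
  rw [sum_add_distrib, sum_const, card_range, smul_eq_mul]
  refine (Nat.div_eq_of_eq_mul_left two_pos ?_).symm
  rw [add_mul, sum_range_id_mul_two]
  cases m with
  | zero => rfl
  | succ n =>
    rw [Nat.add_sub_cancel, show 3 * (n + 1) - 1 = 3 * n + 2 by omega]
    ring

theorem qubit_count_theorem_general {E : Type*} [NormedAddCommGroup E] [InnerProductSpace ℝ E]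
    {m : ℕ} [NeZero m] {b : Fin m → E} {δ : ℝ} (hb : IsLLLReduced δ b) (hδ : 1 / 2 ≤ δ)
    {ξ : ℕ → ℕ} (hξ : ∀ i, i < m → ξ (m - i) = m + i) :
    (∀ c : Fin m → ℤ, ‖∑ i, (c i : ℝ) • b i‖ < ‖b 0‖ → ∀ i : Fin m,
      -(2 ^ (m + i - 1 : ℕ) : ℤ) ≤ c i.rev ∧ c i.rev ≤ 2 ^ (m + i - 1 : ℕ) - 1) ∧
    ∑ i ∈ range m, ξ (m - i) = m * (3 * m - 1) / 2 := by
  refine ⟨fun c hc i ↦ ?_, ?_⟩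
  · have exponent_eq : m - 1 + i = m + i - 1 := by omega
    have abs_lt_pow : |c i.rev| < 2 ^ (m + i - 1 : ℕ) := by
      have real_abs_lt := hb.abs_lt_two_pow hδ hc i.rev
      rw [Fin.rev_rev, exponent_eq] at real_abs_lt
      exact_mod_cast real_abs_lt
    exact ⟨(abs_lt.mp abs_lt_pow).1.le, Int.le_sub_one_of_lt (abs_lt.mp abs_lt_pow).2⟩
  · rw [sum_congr rfl fun i hi ↦ hξ i (mem_range.mp hi), sum_range_const_add_id]

/-- Theorem 1, qubit count for δ = 3/4: For a (3/4)-LLL-reduced basis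
`b_1, …, b_m` of a full-rank lattice in ℝ^m, if the `(m−i)`-th coefficient is encoded
with `ξ_{m−i} = m + i` binary digits (representing the integers from `−2^(m+i−1)` to
`2^(m+i−1) − 1`), then every lattice vector `v = Σ c_i b_i` with integer coefficients
and `‖v‖ < ‖b_1‖` has each coefficient `c_{m−i}` in the representable range
`[−2^(m+i−1), 2^(m+i−1) − 1]`, and the total number of binary digits used is
`Σ_{i=0}^{m−1} (m + i) = m(3m − 1)/2`. -/
theorem qubit_count_theorem
    (M : ℕ) (hm : 1 ≤ M)
    (b bt : Fin M → EuclideanSpace ℝ (Fin M))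
    (μ : Fin M → Fin M → ℝ)
    (hind : LinearIndependent ℝ b)
    (hμ : ∀ i j : Fin M, j < i → μ j i = ⟪b i, bt j⟫ / ⟪bt j, bt j⟫)
    (hbt : ∀ i : Fin M, bt i = b i - ∑ j ∈ Finset.Iio i, μ j i • bt j)
    (hsize : ∀ i j : Fin M, j < i → |μ j i| ≤ 1/2)
    (hLovasz : ∀ (i : Fin M) (h : (i : ℕ) + 1 < M),
      ‖bt ⟨(i : ℕ) + 1, h⟩‖ ^ 2 ≥ (3/4 - (μ i ⟨(i : ℕ) + 1, h⟩) ^ 2) * ‖bt i‖ ^ 2)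
    (ξ : ℕ → ℕ) (hξ : ∀ i : ℕ, i < M → ξ (M - i) = M + i) :
    (∀ (c : Fin M → ℤ),
      ‖∑ i, (c i : ℝ) • b i‖ < ‖b ⟨0, by omega⟩‖ →
      ∀ i : ℕ, ∀ h : i < M,
        -(2 ^ (M + i - 1) : ℤ) ≤ c ⟨M - 1 - i, by omega⟩ ∧
          c ⟨M - 1 - i, by omega⟩ ≤ 2 ^ (M + i - 1) - 1) ∧
    ∑ i ∈ Finset.range M, ξ (M - i) = M * (3 * M - 1) / 2 := by
  have : NeZero M := ⟨by omega⟩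
  simpa only [Fin.forall_iff, Fin.mk_zero', Fin.rev, Nat.sub_sub, add_comm 1] using
    qubit_count_theorem_general (.of_recurrence hμ hbt hsize hLovasz) (by norm_num) hξ
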